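/- Let λ be a Dyck path of order n, σ ∈ L(P_λ), and T = DTR(λ,σ); let ℓ_i and r_i be the positions of the left and right endpoints of the chord labeled i in the natural labeling corresponding to σ. Then area(T) = Σ_{i ∈ DES(ℓ)} (ℓ_i − r_{i+1}) and tiles(T) = Σ_{i ∈ DES(ℓ)} (ℓ_i − r_{i+1} − 2·#{j > i+1 : r_{i+1} < ℓ_j < ℓ_i}), where ℓ denotes the word ℓ_1⋯ℓ_n and DES(ℓ) = {i < n : ℓ_i > ℓ_{i+1}}. -/

import Mathlib

open Finset

noncomputable section

/-- A Dyck path of order `n`: a word of `2n` steps (`true` = up-step `(+1,+1)`,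
`false` = down-step `(+1,-1)`) from `(-n,0)` to `(n,0)` staying weakly above the x-axis. -/
structure DyckPath (n : ℕ) where
  step : Fin (2 * n) → Bool
  balanced : (Finset.univ.filter fun i => step i = true).card = n
  nonneg : ∀ k : ℕ, k ≤ 2 * n →
    (Finset.univ.filter fun i : Fin (2 * n) => (i : ℕ) < k ∧ step i = false).card ≤
      (Finset.univ.filter fun i : Fin (2 * n) => (i : ℕ) < k ∧ step i = true).card

namespace DyckPath

/-- Height of the path above column `x` (columns run from `-n` to `n`). -/
def ht {n : ℕ} (P : DyckPath n) (x : ℤ) : ℤ :=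
  ((Finset.univ.filter fun i : Fin (2 * n) => ((i : ℕ) : ℤ) < x + n ∧ P.step i = true).card : ℤ) -
    ((Finset.univ.filter fun i : Fin (2 * n) => ((i : ℕ) : ℤ) < x + n ∧ P.step i = false).card : ℤ)

/-- Height of the path at lattice point number `k`, `0 ≤ k ≤ 2n`
(point `k` lies at column `k - n`). -/
def pt {n : ℕ} (P : DyckPath n) (k : ℕ) : ℤ := P.ht ((k : ℤ) - n)

end DyckPath

/-- `IsChord P p q`: the up-step at (0-indexed) position `p` matches the down-step at
position `q`, forming a chord of `P`. -/
def IsChord {n : ℕ} (P : DyckPath n) (p q : ℕ) : Prop :=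
  p < q ∧ q < 2 * n ∧
    (∃ hp : p < 2 * n, P.step ⟨p, hp⟩ = true) ∧
    (∃ hq : q < 2 * n, P.step ⟨q, hq⟩ = false) ∧
    P.pt (q + 1) = P.pt p ∧
    ∀ m : ℕ, p < m → m ≤ q → P.pt p < P.pt m

/-- A natural labeling of the chord poset of `P`: the chord labeled `i` has its up-step at
(0-indexed) position `l i` and matching down-step at position `r i`; distinct labels name
distinct chords; and if one chord is nested inside another it receives a larger label. -/
structure ChordLabeling {n : ℕ} (P : DyckPath n) where
  l : Fin n → ℕ
  r : Fin n → ℕ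
  chord : ∀ i, IsChord P (l i) (r i)
  inj : Function.Injective l
  natural : ∀ i j : Fin n, l j < l i → r i < r j → j < i

/-- The length of the chord labeled `i`: the number of up steps of `P` between and
including its two endpoints. -/
def chordLen {n : ℕ} {P : DyckPath n} (C : ChordLabeling P) (i : Fin n) : ℕ :=
  (Finset.univ.filter fun m : Fin (2 * n) =>
    C.l i ≤ (m : ℕ) ∧ (m : ℕ) ≤ C.r i ∧ P.step m = true).card

/-- The growth sequence `p_1, …, p_n` associated with a natural chord labeling:
`p i = #{j<i : l j < l i} + #{j<i : r j < l i}`. -/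
def seqOf {n : ℕ} {P : DyckPath n} (C : ChordLabeling P) (i : Fin n) : ℕ :=
  (Finset.univ.filter fun j : Fin n => j < i ∧ C.l j < C.l i).card +
    (Finset.univ.filter fun j : Fin n => j < i ∧ C.r j < C.l i).card

/-- `σ` is the standardization of the word `w` (with distinct letters). -/
def IsStandardization {n : ℕ} (w : Fin n → ℕ) (σ : Equiv.Perm (Fin n)) : Prop :=
  ∀ i j : Fin n, σ i < σ j ↔ w i < w j

/-- `σ ∈ 𝓛(P_λ)`: σ is `L₀ ∘ L⁻¹` for some natural labeling `L` of the chord poset,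
equivalently the standardization of the word of left endpoints of a natural labeling. -/
def LinExt {n : ℕ} (P : DyckPath n) (σ : Equiv.Perm (Fin n)) : Prop :=
  ∃ C : ChordLabeling P, IsStandardization C.l σ

/-- Successor index in `Fin n` (used only under the guard `i+1 < n`). -/
def nextIdx {n : ℕ} (i : Fin n) : Fin n := ⟨((i : ℕ) + 1) % n, Nat.mod_lt _ i.pos⟩

/-- Descent set of a word: positions `i` with `i+1 < n` and `w i > w (i+1)`. -/
def descentFinset {n : ℕ} (w : Fin n → ℕ) : Finset (Fin n) :=
  Finset.univ.filter fun i => (i : ℕ) + 1 < n ∧ w (nextIdx i) < w i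

/-- Number of inversions of a word. -/
def wordInv {n : ℕ} (w : Fin n → ℕ) : ℕ :=
  (Finset.univ.filter fun p : Fin n × Fin n => p.1 < p.2 ∧ w p.2 < w p.1).card

/-- The word of values of a permutation. -/
def permWord {n : ℕ} (σ : Equiv.Perm (Fin n)) : Fin n → ℕ := fun i => (σ i : ℕ)

/-- inv(σ). -/
def permInv {n : ℕ} (σ : Equiv.Perm (Fin n)) : ℕ := wordInv (permWord σ)

/-- des(σ). -/
def permDes {n : ℕ} (σ : Equiv.Perm (Fin n)) : ℕ := (descentFinset (permWord σ)).card

/-- `REM_i(w) = {k > i : w i > w k > w (i+1)}`, the right embraced numbers. -/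
def remSet {n : ℕ} (w : Fin n → ℕ) (i : Fin n) : Finset (Fin n) :=
  Finset.univ.filter fun k => i < k ∧ w (nextIdx i) < w k ∧ w k < w i

/-- desdif(σ) = Σ_{i ∈ DES σ} (σ i − σ (i+1)). -/
def desdif {n : ℕ} (σ : Equiv.Perm (Fin n)) : ℕ :=
  ∑ i ∈ descentFinset (permWord σ), (permWord σ i - permWord σ (nextIdx i))

/-- res(σ) = Σ_{i ∈ DES σ} #{k < i : σ i > σ k > σ (i+1)}. -/
def resStat {n : ℕ} (σ : Equiv.Perm (Fin n)) : ℕ :=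
  ∑ i ∈ descentFinset (permWord σ),
    (Finset.univ.filter fun k : Fin n =>
      k < i ∧ permWord σ (nextIdx i) < permWord σ k ∧ permWord σ k < permWord σ i).card

/-- The Mahonian statistic mad(σ) = desdif(σ) + res(σ). -/
def mad {n : ℕ} (σ : Equiv.Perm (Fin n)) : ℕ := desdif σ + resStat σ

/-- σ avoids the pattern 231. -/
def Avoids231 {n : ℕ} (σ : Equiv.Perm (Fin n)) : Prop :=
  ¬∃ i j k : Fin n, i < j ∧ j < k ∧ σ k < σ i ∧ σ i < σ j

/-- The boxes of the skew shape `lam/mu` (with `mu` weakly above `lam`), each box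
recorded by its bottom corner (a lattice point `(x, z)` with `z ≡ x + n (mod 2)`). -/
def skewCells {n : ℕ} (lam mu : DyckPath n) : Finset (ℤ × ℤ) :=
  ((Finset.Icc (-(n : ℤ)) n) ×ˢ (Finset.Icc (0 : ℤ) n)).filter fun c =>
    lam.ht c.1 ≤ c.2 ∧ c.2 + 2 ≤ mu.ht c.1 ∧ (c.2 - c.1 - n) % 2 = 0

/-- A Dyck tile, recorded by the set of bottom corners of its boxes: these form
a Dyck-path shape, i.e. a ±1-step lattice path whose two ends are lowest. -/
def IsDyckTile (t : Finset (ℤ × ℤ)) : Prop :=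
  ∃ (a b : ℤ) (f : ℤ → ℤ), a ≤ b ∧
    (∀ x : ℤ, a ≤ x → x < b → f (x + 1) = f x + 1 ∨ f (x + 1) = f x - 1) ∧
    f b = f a ∧ (∀ x : ℤ, a ≤ x → x ≤ b → f a ≤ f x) ∧
    t = (Finset.Icc a b).image fun x => (x, f x)

/-- A Dyck tiling of order `n`: a tiling of the skew shape between two Dyck paths of
order `n` by Dyck tiles. -/
structure DyckTiling (n : ℕ) where
  lower : DyckPath n
  upper : DyckPath n
  below : ∀ x : ℤ, lower.ht x ≤ upper.ht x
  tiles : Finset (Finset (ℤ × ℤ))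
  isDyck : ∀ t ∈ tiles, IsDyckTile t
  disj : ∀ t ∈ tiles, ∀ u ∈ tiles, t ≠ u → Disjoint t u
  cover : tiles.biUnion id = skewCells lower upper

namespace DyckTiling

/-- Number of boxes of the skew shape. -/
def area {n : ℕ} (T : DyckTiling n) : ℕ := (skewCells T.lower T.upper).card

/-- Number of tiles. -/
def numTiles {n : ℕ} (T : DyckTiling n) : ℕ := T.tiles.card

/-- art(T) = (area(T) + tiles(T)) / 2. -/
def art {n : ℕ} (T : DyckTiling n) : ℕ := (T.area + T.numTiles) / 2

/-- dis(T): the number of step positions where the lower path steps down while the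
upper path steps up. -/
def dis {n : ℕ} (T : DyckTiling n) : ℕ :=
  (Finset.univ.filter fun i : Fin (2 * n) =>
    T.lower.step i = false ∧ T.upper.step i = true).card

/-- Cover-inclusiveness: whenever a tile has a box strictly above a box of another tile,
its horizontal extent is contained in that of the other tile. -/
def CoverInclusive {n : ℕ} (T : DyckTiling n) : Prop :=
  ∀ t ∈ T.tiles, ∀ u ∈ T.tiles,
    (∃ p ∈ t, ∃ q ∈ u, (p : ℤ × ℤ).1 = (q : ℤ × ℤ).1 ∧ (q : ℤ × ℤ).2 < (p : ℤ × ℤ).2) →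
    ∀ p ∈ t, ∃ y : ℤ, ((p : ℤ × ℤ).1, y) ∈ u

end DyckTiling

/-- Height function of the spread at column `s` of a Dyck path. -/
def spreadHt {n : ℕ} (P : DyckPath n) (s x : ℤ) : ℤ :=
  if x < s then P.ht (x + 1) else if x = s then P.ht s + 1 else P.ht (x - 1)

/-- Spread of a tile at column `s`: points left of `s` move left, points right of `s`
move right, and a point at column `s` is duplicated upward. -/
def spreadTile (s : ℤ) (t : Finset (ℤ × ℤ)) : Finset (ℤ × ℤ) :=
  ((t.filter fun p => p.1 ≤ s).image fun p => (p.1 - 1, p.2)) ∪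
    ((t.filter fun p => p.1 = s).image fun p => (p.1, p.2 + 1)) ∪
    ((t.filter fun p => s ≤ p.1).image fun p => (p.1 + 1, p.2))

/-- Spread of a set of tiles at column `s`. -/
def spreadTiles (s : ℤ) (ts : Finset (Finset (ℤ × ℤ))) : Finset (Finset (ℤ × ℤ)) :=
  ts.image (spreadTile s)

/-- Column `c` is eligible for a tiling with upper-boundary height function `h` and
tile set `ts`: the upper boundary has an up step ending at column `c`, and its point at
column `c` is not the top corner of a one-box tile. -/
def EligibleCol (h : ℤ → ℤ) (ts : Finset (Finset (ℤ × ℤ))) (c : ℤ) : Prop :=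
  h c = h (c - 1) + 1 ∧ ({(c, h c - 2)} : Finset (ℤ × ℤ)) ∉ ts

/-- `T'` is the result of the strip-grow map applied to `(T, s)`: spread `T` at `s` and
add a one-box tile on each up step of the (spread) upper boundary starting at a column
`≥ s` (i.e. strictly to the right of column `s`). -/
def StripGrowRel {n : ℕ} (T : DyckTiling n) (s : ℤ) (T' : DyckTiling (n + 1)) : Prop :=
  (∀ x : ℤ, T'.lower.ht x = spreadHt T.lower s x) ∧
  (∀ x : ℤ, T'.upper.ht x =
    if s ≤ x ∧ spreadHt T.upper s (x + 1) = spreadHt T.upper s x + 1 then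
      spreadHt T.upper s x + 2
    else spreadHt T.upper s x) ∧
  T'.tiles = spreadTiles s T.tiles ∪
    ((Finset.Icc s (n : ℤ)).filter fun x =>
        spreadHt T.upper s (x + 1) = spreadHt T.upper s x + 1).image
      (fun x => ({(x, spreadHt T.upper s x)} : Finset (ℤ × ℤ)))

/-- `T'` is the result of the ribbon-grow map applied to `(T, s)`: spread `T` at `s`,
and if the special column `Q` of the spread tiling is strictly right of `s`, add a
ribbon of one-box tiles at all columns strictly between `s` and `Q`. -/
def RibbonGrowRel {n : ℕ} (T : DyckTiling n) (s : ℤ) (T' : DyckTiling (n + 1)) : Prop :=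
  (∀ x : ℤ, T'.lower.ht x = spreadHt T.lower s x) ∧
  ∃ Q : ℤ,
    EligibleCol (spreadHt T.upper s) (spreadTiles s T.tiles) Q ∧
    (∀ c : ℤ, EligibleCol (spreadHt T.upper s) (spreadTiles s T.tiles) c → c ≤ Q) ∧
    (∀ x : ℤ, T'.upper.ht x =
      if s < x ∧ x < Q then spreadHt T.upper s x + 2 else spreadHt T.upper s x) ∧
    T'.tiles = spreadTiles s T.tiles ∪
      (Finset.Ioo s Q).image (fun x => ({(x, spreadHt T.upper s x)} : Finset (ℤ × ℤ)))

/-- `s` is the special column of `T`: its rightmost eligible column. -/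
def SpecialCol {n : ℕ} (T : DyckTiling n) (s : ℤ) : Prop :=
  EligibleCol T.upper.ht T.tiles s ∧ ∀ c : ℤ, EligibleCol T.upper.ht T.tiles c → c ≤ s

/-- In the strip-shrink map applied to `T'` with special column `s`, a one-box tile is
removed at column `x`: `x` is right of `s` and there is a one-box tile there that is
part of an up step of the upper boundary. -/
def StripRemovedAt {n : ℕ} (T' : DyckTiling n) (s x : ℤ) : Prop :=
  s < x ∧ T'.upper.ht x = T'.upper.ht (x - 1) + 1 ∧
    ({(x, T'.upper.ht x - 2)} : Finset (ℤ × ℤ)) ∈ T'.tiles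

instance {n : ℕ} (T' : DyckTiling n) (s x : ℤ) : Decidable (StripRemovedAt T' s x) := by
  unfold StripRemovedAt; infer_instance

/-- `(T, s)` is the result of the strip-shrink map applied to `T'`: `s` is the special
column of `T'`; all one-box tiles right of `s` lying on up steps of the upper boundary
are removed; and the result is the spread of `T` at `s`. -/
def StripShrinkRel {n : ℕ} (T' : DyckTiling (n + 1)) (T : DyckTiling n) (s : ℤ) : Prop :=
  SpecialCol T' s ∧
  (∀ x : ℤ, spreadHt T.lower s x = T'.lower.ht x) ∧
  (∀ x : ℤ, spreadHt T.upper s x =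
    if StripRemovedAt T' s x then T'.upper.ht x - 2 else T'.upper.ht x) ∧
  spreadTiles s T.tiles =
    T'.tiles \ (((Finset.Ioc s ((n : ℤ) + 1)).filter fun x => StripRemovedAt T' s x).image
      fun x => ({(x, T'.upper.ht x - 2)} : Finset (ℤ × ℤ)))

/-- `(T, s)` is the result of the ribbon-shrink map applied to `T'`: `s` is the special
column of `T'`; the maximal run of topmost one-box tiles in columns `s+1, s+2, …` is
removed; and the result is the spread of `T` at `s`. -/
def RibbonShrinkRel {n : ℕ} (T' : DyckTiling (n + 1)) (T : DyckTiling n) (s : ℤ) : Prop :=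
  SpecialCol T' s ∧
  ∃ r : ℤ, s < r ∧
    (∀ x : ℤ, s < x → x < r → ({(x, T'.upper.ht x - 2)} : Finset (ℤ × ℤ)) ∈ T'.tiles) ∧
    ({(r, T'.upper.ht r - 2)} : Finset (ℤ × ℤ)) ∉ T'.tiles ∧
    (∀ x : ℤ, spreadHt T.lower s x = T'.lower.ht x) ∧
    (∀ x : ℤ, spreadHt T.upper s x =
      if s < x ∧ x < r then T'.upper.ht x - 2 else T'.upper.ht x) ∧
    spreadTiles s T.tiles =
      T'.tiles \ ((Finset.Ioo s r).image fun x => ({(x, T'.upper.ht x - 2)} : Finset (ℤ × ℤ)))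

/-- `IsDTS n p T`: `T` is the Dyck tiling `DTS(p_1, …, p_n)` (indices 0-based, so the
growth column for step `i` is `p i - i`). -/
inductive IsDTS : (n : ℕ) → (Fin n → ℕ) → DyckTiling n → Prop where
  | nil (p : Fin 0 → ℕ) (T : DyckTiling 0) : IsDTS 0 p T
  | cons (n : ℕ) (p : Fin (n + 1) → ℕ) (T : DyckTiling n) (T' : DyckTiling (n + 1)) :
      IsDTS n (fun i => p i.castSucc) T →
      StripGrowRel T ((p (Fin.last n) : ℤ) - n) T' → IsDTS (n + 1) p T'

/-- `IsDTR n p T`: `T` is the Dyck tiling `DTR(p_1, …, p_n)`. -/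
inductive IsDTR : (n : ℕ) → (Fin n → ℕ) → DyckTiling n → Prop where
  | nil (p : Fin 0 → ℕ) (T : DyckTiling 0) : IsDTR 0 p T
  | cons (n : ℕ) (p : Fin (n + 1) → ℕ) (T : DyckTiling n) (T' : DyckTiling (n + 1)) :
      IsDTR n (fun i => p i.castSucc) T →
      RibbonGrowRel T ((p (Fin.last n) : ℤ) - n) T' → IsDTR (n + 1) p T'

/-- `T = DTS(λ, σ)`. -/
def IsDTSof {n : ℕ} (lam : DyckPath n) (σ : Equiv.Perm (Fin n)) (T : DyckTiling n) : Prop :=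
  ∃ C : ChordLabeling lam, IsStandardization C.l σ ∧ IsDTS n (seqOf C) T

/-- `T = DTR(λ, σ)`. -/
def IsDTRof {n : ℕ} (lam : DyckPath n) (σ : Equiv.Perm (Fin n)) (T : DyckTiling n) : Prop :=
  ∃ C : ChordLabeling lam, IsStandardization C.l σ ∧ IsDTR n (seqOf C) T

/-- Increment `a` if it exceeds `p`. -/
def bump (p a : ℕ) : ℕ := if p < a then a + 1 else a

/-- The perfect matching `match(p_1, …, p_n)` of `{1, …, 2n}`. -/
def matchSeq : (n : ℕ) → (Fin n → ℕ) → Finset (ℕ × ℕ)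
  | 0, _ => ∅
  | n + 1, p =>
    ((matchSeq n fun i => p i.castSucc).image fun q =>
      (bump (p (Fin.last n)) q.1, bump (p (Fin.last n)) q.2)) ∪
      {(p (Fin.last n) + 1, 2 * (n + 1))}

/-- The number of nestings of a matching: pairs `(a,b)`, `(c,d)` with `c < a < b < d`. -/
def nestings (M : Finset (ℕ × ℕ)) : ℕ :=
  ((M ×ˢ M).filter fun q => q.2.1 < q.1.1 ∧ q.1.1 < q.1.2 ∧ q.1.2 < q.2.2).card

/-- `w` is the min-word of `M`: the list of the smaller elements of the pairs of `M`,
sorted by the larger elements. -/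
def IsMinWord (n : ℕ) (M : Finset (ℕ × ℕ)) (w : Fin n → ℕ) : Prop :=
  ∃ b : Fin n → ℕ, StrictMono b ∧ (∀ i, w i < b i) ∧
    M = Finset.univ.image fun i => (w i, b i)

/-- The number of tiles of `T` containing boxes over both endpoint columns of the
chord with endpoints at step positions `p < q`. -/
def chordTileCount {n : ℕ} (T : DyckTiling n) (p q : ℕ) : ℕ :=
  (T.tiles.filter fun t =>
    (∃ c ∈ t, (c : ℤ × ℤ).1 = (p : ℤ) + 1 - n) ∧ (∃ c ∈ t, (c : ℤ × ℤ).1 = (q : ℤ) - n)).card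

/-- A Dyck tableau of order `n` over the zigzag path `Z` of order `n+1`: a skew shape
`Z/μ` with `n` dots, one in each column of the skew shape through a valley of `Z`. -/
structure DyckTableau (n : ℕ) (Z : DyckPath (n + 1)) where
  upper : DyckPath (n + 1)
  below : ∀ x : ℤ, Z.ht x ≤ upper.ht x
  dots : Finset (ℤ × ℤ)
  sub : dots ⊆ skewCells Z upper
  card_dots : dots.card = n
  valley : ∀ x : ℤ, Z.ht (x - 1) = Z.ht x + 1 → Z.ht (x + 1) = Z.ht x + 1 →
    (dots.filter fun c => c.1 = x).card = 1

/-- The `q`-integer `[m]_q = 1 + q + ⋯ + q^(m-1)` as a polynomial. -/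
def qint (m : ℕ) : Polynomial ℤ := ∑ i ∈ Finset.range m, Polynomial.X ^ i

/-- The `q`-factorial `[n]_q!`. -/
def qfact (n : ℕ) : Polynomial ℤ := ∏ i ∈ Finset.range n, qint (i + 1)

/-!
Inserting the chords of `λ` in the order of their labels is spreading: chord `i` enters as two
adjacent steps, and spreading the tiling at the same column keeps the distance between its two
boundary paths wherever no box is added. After the insertion of chord `i` the column of `ℓ_i` is
special, so the next ribbon reaches from the column of `r_{i+1}` to that of `ℓ_i`, and it is
nonempty exactly when `i` is a descent. Following every column to its final position, the ribbon of
a descent `i` accounts in the end for `ℓ_i − r_{i+1}` boxes, one in each column between its two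
ends, which gives the area. The ribbon contributes one tile per box at its creation; a chord
inserted later between its two ends lengthens it by two boxes but adds no tile to it, which gives
the number of tiles.
-/

namespace DyckPath

variable {n : ℕ} (P : DyckPath n) {x : ℤ}

lemma ht_emod_two (h₁ : -(n : ℤ) ≤ x) (h₂ : x ≤ n) : (P.ht x - x - n) % 2 = 0 := by
  obtain ⟨k, hk⟩ := Int.eq_ofNat_of_zero_le (by omega : 0 ≤ x + n)
  have hsplit := card_filter_add_card_filter_not
    (s := {i : Fin (2 * n) | (i : ℕ) < k}) (fun i => P.step i = true)
  simp only [filter_filter, Bool.not_eq_true, Fin.card_filter_val_lt] at hsplit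
  simp only [ht, hk, Nat.cast_lt]
  omega

lemma ht_nonneg (h₁ : -(n : ℤ) ≤ x) (h₂ : x ≤ n) : 0 ≤ P.ht x := by
  obtain ⟨k, hk⟩ := Int.eq_ofNat_of_zero_le (by omega : 0 ≤ x + n)
  have := P.nonneg k (by omega)
  simp only [ht, hk, Nat.cast_lt]
  omega

lemma ht_le (x : ℤ) : P.ht x ≤ n := by
  have hup : #{i : Fin (2 * n) | ((i : ℕ) : ℤ) < x + n ∧ P.step i = true} ≤
      #{i | P.step i = true} := card_le_card (monotone_filter_right _ fun _ _ h => h.2)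
  rw [P.balanced] at hup
  unfold ht
  omega

lemma ext_step {P Q : DyckPath n} (h : P.step = Q.step) : P = Q := by
  cases P
  cases Q
  congr

instance : Subsingleton (DyckPath 0) where
  allEq _ _ := ext_step (funext fun i => i.elim0)

instance : Subsingleton (DyckPath 1) where
  allEq P Q := by
    have hunique : ∀ f : Fin (2 * 1) → Bool, #{i | f i = true} = 1 →
        #{i : Fin (2 * 1) | (i : ℕ) < 1 ∧ f i = false} ≤
          #{i : Fin (2 * 1) | (i : ℕ) < 1 ∧ f i = true} →
        f = ![true, false] := by decide
    exact ext_step <| (hunique P.step P.balanced (P.nonneg 1 (by simp))).trans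
      (hunique Q.step Q.balanced (Q.nonneg 1 (by simp))).symm

end DyckPath

section SkewCells

variable {n : ℕ} {lam mu : DyckPath n}

lemma two_mul_card_filter_skewCells {x : ℤ} (h₁ : -(n : ℤ) ≤ x) (h₂ : x ≤ n)
    (hle : lam.ht x ≤ mu.ht x) :
    2 * (#{c ∈ skewCells lam mu | c.1 = x} : ℤ) = mu.ht x - lam.ht x := by
  have hlam := lam.ht_emod_two h₁ h₂
  have hmu := mu.ht_emod_two h₁ h₂
  have hnonneg := lam.ht_nonneg h₁ h₂
  have htop := mu.ht_le x
  obtain ⟨d, hd⟩ : ∃ d : ℕ, mu.ht x - lam.ht x = 2 * d :=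
    ⟨((mu.ht x - lam.ht x) / 2).toNat, by omega⟩
  have hcells : {c ∈ skewCells lam mu | c.1 = x} =
      (range d).image fun j : ℕ => (x, lam.ht x + 2 * (j : ℤ)) := by
    ext ⟨y, z⟩
    simp only [skewCells, mem_filter, mem_product, mem_Icc, mem_image, mem_range, Prod.mk.injEq]
    constructor
    · rintro ⟨⟨-, h⟩, rfl⟩
      exact ⟨((z - lam.ht y) / 2).toNat, by omega, rfl, by omega⟩
    · rintro ⟨j, hj, rfl, rfl⟩
      omega
  have hinj : Function.Injective fun j : ℕ => (x, lam.ht x + 2 * (j : ℤ)) := fun i j hij => by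
    simpa using hij
  rw [hcells, card_image_of_injective _ hinj, card_range, hd]

lemma two_mul_card_skewCells (hle : ∀ x, lam.ht x ≤ mu.ht x) :
    2 * (#(skewCells lam mu) : ℤ) = ∑ x ∈ Icc (-(n : ℤ)) n, (mu.ht x - lam.ht x) := by
  have hmaps : Set.MapsTo Prod.fst (skewCells lam mu : Set (ℤ × ℤ)) (Icc (-(n : ℤ)) n) :=
    fun c hc => (mem_product.1 (mem_filter.1 hc).1).1
  rw [card_eq_sum_card_fiberwise hmaps, Nat.cast_sum, mul_sum]
  refine sum_congr rfl fun x hx => ?_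
  rw [mem_Icc] at hx
  exact two_mul_card_filter_skewCells hx.1 hx.2 (hle x)

end SkewCells

namespace DyckTiling

variable {n : ℕ} (T : DyckTiling n)

/-- The vertical distance between the two boundary paths of `T` over column `x`, which is twice the
number of boxes in that column. -/
def gap (x : ℤ) : ℤ := T.upper.ht x - T.lower.ht x

lemma two_mul_area : 2 * (T.area : ℤ) = ∑ m ∈ range (2 * n + 1), T.gap ((m : ℤ) - n) := by
  rw [area, two_mul_card_skewCells T.below]
  refine sum_nbij' (fun x => (x + n).toNat) (fun m => (m : ℤ) - n) ?_ ?_ ?_ ?_ ?_ <;>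
    simp only [mem_Icc, mem_range]
  iterate 4 omega
  intro x hx
  rw [Int.toNat_of_nonneg (by omega), add_sub_cancel_right, gap]

variable {T}

lemma mem_skewCells {t : Finset (ℤ × ℤ)} (ht : t ∈ T.tiles) {c : ℤ × ℤ} (hc : c ∈ t) :
    c ∈ skewCells T.lower T.upper :=
  T.cover ▸ mem_biUnion.2 ⟨t, ht, hc⟩

lemma add_two_le_ht {t : Finset (ℤ × ℤ)} (ht : t ∈ T.tiles) {x z : ℤ} (hc : (x, z) ∈ t) :
    z + 2 ≤ T.upper.ht x :=
  (mem_filter.1 (mem_skewCells ht hc)).2.2.1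

variable [Subsingleton (DyckPath n)]

lemma gap_eq_zero_of_subsingleton (x : ℤ) : T.gap x = 0 := by
  rw [gap, Subsingleton.elim T.upper T.lower, sub_self]

lemma numTiles_eq_zero_of_subsingleton : T.numTiles = 0 := by
  refine card_eq_zero.2 (eq_empty_of_forall_notMem fun t ht => ?_)
  obtain ⟨a, b, f, hab, -, -, -, rfl⟩ := T.isDyck t ht
  have hmem := mem_skewCells ht (mem_image_of_mem _ (left_mem_Icc.2 hab))
  rw [Subsingleton.elim T.upper T.lower] at hmem
  have := (mem_filter.1 hmem).2
  omega

end DyckTiling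

section Spread

variable {s x z : ℤ} {t : Finset (ℤ × ℤ)} {ts : Finset (Finset (ℤ × ℤ))}

lemma mem_spreadTile :
    (x, z) ∈ spreadTile s t ↔
      (x < s ∧ (x + 1, z) ∈ t) ∨ (x = s ∧ (x, z - 1) ∈ t) ∨ (s < x ∧ (x - 1, z) ∈ t) := by
  simp only [spreadTile, mem_union, mem_image, mem_filter, Prod.exists, Prod.mk.injEq]
  constructor
  · rintro ((⟨a, b, ⟨h, ha⟩, rfl, rfl⟩ | ⟨a, b, ⟨h, rfl⟩, rfl, rfl⟩) | ⟨a, b, ⟨h, ha⟩, rfl, rfl⟩)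
    · exact .inl ⟨by omega, by simpa using h⟩
    · exact .inr (.inl ⟨rfl, by simpa using h⟩)
    · exact .inr (.inr ⟨by omega, by simpa using h⟩)
  · rintro (⟨hx, h⟩ | ⟨rfl, h⟩ | ⟨hx, h⟩)
    · exact .inl (.inl ⟨_, _, ⟨h, by omega⟩, by omega, rfl⟩)
    · exact .inl (.inr ⟨_, _, ⟨h, rfl⟩, rfl, by omega⟩)
    · exact .inr ⟨_, _, ⟨h, by omega⟩, by omega, rfl⟩

lemma sub_one_mem_spreadTile (hx : x ≤ s) : (x - 1, z) ∈ spreadTile s t ↔ (x, z) ∈ t := by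
  simp only [mem_spreadTile, sub_add_cancel]
  exact ⟨by rintro (⟨-, h⟩ | ⟨h, -⟩ | ⟨h, -⟩) <;> first | exact h | omega,
    fun h => .inl ⟨by omega, h⟩⟩

lemma self_mem_spreadTile : (s, z) ∈ spreadTile s t ↔ (s, z - 1) ∈ t := by
  simp [mem_spreadTile]

lemma add_one_mem_spreadTile (hx : s ≤ x) : (x + 1, z) ∈ spreadTile s t ↔ (x, z) ∈ t := by
  simp only [mem_spreadTile, add_sub_cancel_right]
  exact ⟨by rintro (⟨h, -⟩ | ⟨h, -⟩ | ⟨-, h⟩) <;> first | exact h | omega,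
    fun h => .inr (.inr ⟨by omega, h⟩)⟩

lemma spreadTile_injective (s : ℤ) : Function.Injective (spreadTile s) := by
  intro t u htu
  ext ⟨x, z⟩
  rcases le_total x s with hx | hx
  · rw [← sub_one_mem_spreadTile hx, htu, sub_one_mem_spreadTile hx]
  · rw [← add_one_mem_spreadTile hx, htu, add_one_mem_spreadTile hx]

lemma spreadTile_singleton (hx : s < x) : spreadTile s {(x, z)} = {(x + 1, z)} := by
  ext ⟨y, w⟩
  simp only [mem_spreadTile, mem_singleton, Prod.mk.injEq]
  omega

lemma spreadTile_ne_singleton (s z : ℤ) (t : Finset (ℤ × ℤ)) : spreadTile s t ≠ {(s, z)} := by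
  intro h
  have ht : (s, z - 1) ∈ t := self_mem_spreadTile.1 (h ▸ mem_singleton_self _)
  rw [← sub_one_mem_spreadTile le_rfl, h] at ht
  simp at ht

lemma singleton_mem_spreadTiles (hx : s < x) :
    {(x + 1, z)} ∈ spreadTiles s ts ↔ {(x, z)} ∈ ts := by
  rw [← spreadTile_singleton hx, spreadTiles, (spreadTile_injective s).mem_finset_image]

lemma singleton_notMem_spreadTiles (s z : ℤ) (ts : Finset (Finset (ℤ × ℤ))) :
    {(s, z)} ∉ spreadTiles s ts := by
  simpa [spreadTiles] using fun t _ => spreadTile_ne_singleton s z t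

variable {n : ℕ} (P : DyckPath n)

lemma spreadHt_sub_one (hx : x ≤ s) : spreadHt P s (x - 1) = P.ht x := by
  rw [spreadHt, if_pos (by omega), sub_add_cancel]

lemma spreadHt_self (s : ℤ) : spreadHt P s s = P.ht s + 1 := by
  simp [spreadHt]

lemma spreadHt_add_one (hx : s ≤ x) : spreadHt P s (x + 1) = P.ht x := by
  rw [spreadHt, if_neg (by omega), if_neg (by omega), add_sub_cancel_right]

lemma eligibleCol_spread_self (s : ℤ) (ts : Finset (Finset (ℤ × ℤ))) :
    EligibleCol (spreadHt P s) (spreadTiles s ts) s :=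
  ⟨by rw [spreadHt_self, spreadHt_sub_one P le_rfl], singleton_notMem_spreadTiles _ _ _⟩

lemma eligibleCol_spread_add_one (hx : s ≤ x) :
    EligibleCol (spreadHt P s) (spreadTiles s ts) (x + 1) ↔ s < x ∧ EligibleCol P.ht ts x := by
  rcases hx.eq_or_lt with rfl | hlt
  · simp only [EligibleCol, spreadHt_add_one P le_rfl, add_sub_cancel_right, spreadHt_self]
    omega
  · have hht : spreadHt P s x = P.ht (x - 1) := by
      simpa using spreadHt_add_one P (by omega : s ≤ x - 1)
    simp only [EligibleCol, spreadHt_add_one P hx, add_sub_cancel_right, hht,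
      singleton_mem_spreadTiles hlt, hlt, true_and]

end Spread

/-- A tile at the height of the ribbon would have risen above the upper boundary of `T`. -/
lemma DyckTiling.singleton_spreadHt_notMem_spreadTiles {n : ℕ} (T : DyckTiling n) {s x : ℤ}
    (hx : s < x) : {(x, spreadHt T.upper s x)} ∉ spreadTiles s T.tiles := by
  intro hmem
  obtain ⟨t, ht, heq⟩ := mem_image.1 hmem
  obtain ⟨y, rfl⟩ : ∃ y, x = y + 1 := ⟨x - 1, by omega⟩
  rw [spreadHt_add_one _ (by omega : s ≤ y)] at heq
  have hcell : (y, T.upper.ht y) ∈ t :=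
    (add_one_mem_spreadTile (by omega : s ≤ y)).1 (heq ▸ mem_singleton_self _)
  have := add_two_le_ht ht hcell
  omega

namespace RibbonGrowRel

variable {n : ℕ} {T : DyckTiling n} {s : ℤ} {T' : DyckTiling (n + 1)}

lemma eligibleCol_self (h : RibbonGrowRel T s T') : EligibleCol T'.upper.ht T'.tiles s := by
  obtain ⟨-, Q, -, -, hup, htiles⟩ := h
  constructor
  · rw [hup, hup, if_neg (by omega), if_neg (by omega)]
    exact (eligibleCol_spread_self T.upper s T.tiles).1
  · rw [htiles, mem_union, not_or]
    refine ⟨singleton_notMem_spreadTiles _ _ _, fun hmem => ?_⟩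
    obtain ⟨x, hx, heq⟩ := mem_image.1 hmem
    simp only [mem_Ioo, singleton_inj, Prod.mk.injEq] at hx heq
    omega

/-- Over the ribbon the topmost boxes are one-box tiles, and the up step that ended at `Q` has
become a down step. -/
lemma not_eligibleCol (h : RibbonGrowRel T s T') {c : ℤ} (hc : s < c) :
    ¬EligibleCol T'.upper.ht T'.tiles c := by
  obtain ⟨-, Q, hQ, hmax, hup, htiles⟩ := h
  rintro ⟨hstep, htile⟩
  rw [htiles, mem_union, not_or] at htile
  rcases lt_trichotomy c Q with hcQ | rfl | hQc
  · refine htile.2 (mem_image.2 ⟨c, mem_Ioo.2 ⟨hc, hcQ⟩, ?_⟩)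
    rw [hup, if_pos ⟨hc, hcQ⟩, add_sub_cancel_right]
  · obtain ⟨y, rfl⟩ : ∃ y, c = y + 1 := ⟨c - 1, by omega⟩
    have hlt := ((eligibleCol_spread_add_one T.upper (by omega)).1 hQ).1
    rw [hup, hup, if_neg (by omega), if_pos (by omega)] at hstep
    have := hQ.1
    omega
  · rw [hup, hup, if_neg (by omega), if_neg (by omega)] at hstep
    rw [hup, if_neg (by omega)] at htile
    exact hQc.not_ge (hmax c ⟨hstep, htile.1⟩)

lemma specialCol (h : RibbonGrowRel T s T') : SpecialCol T' s :=
  ⟨h.eligibleCol_self, fun _ hc => not_lt.1 fun hlt => h.not_eligibleCol hlt hc⟩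

/-- The spreading moves the special column `c` of `T` to `c + 1` if it lies right of `s`, and makes
`s` itself special otherwise; either way the ribbon occupies the columns of `Ioc s c`. -/
lemma exists_Ioo_eq_Ioc {c : ℤ} (h : RibbonGrowRel T s T') (hc : SpecialCol T c) :
    ∃ Q, Ioo s Q = Ioc s c ∧
      (∀ x, T'.upper.ht x = if s < x ∧ x < Q then spreadHt T.upper s x + 2
        else spreadHt T.upper s x) ∧
      T'.tiles = spreadTiles s T.tiles ∪
        (Ioo s Q).image fun x => ({(x, spreadHt T.upper s x)} : Finset (ℤ × ℤ)) := by
  obtain ⟨-, Q, hQ, hmax, hup, htiles⟩ := h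
  refine ⟨Q, ?_, hup, htiles⟩
  have hs := hmax s (eligibleCol_spread_self T.upper s T.tiles)
  have hle : s < Q → Q ≤ c + 1 := fun hsQ => by
    obtain ⟨y, rfl⟩ : ∃ y, Q = y + 1 := ⟨Q - 1, by omega⟩
    have := hc.2 _ ((eligibleCol_spread_add_one T.upper (by omega)).1 hQ).2
    omega
  have hge : s < c → c + 1 ≤ Q := fun hsc =>
    hmax _ ((eligibleCol_spread_add_one T.upper hsc.le).2 ⟨hsc, hc.1⟩)
  ext x
  simp only [mem_Ioo, mem_Ioc]
  omega

variable {c x : ℤ}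

lemma upper_ht (h : RibbonGrowRel T s T') (hc : SpecialCol T c) (x : ℤ) :
    T'.upper.ht x = spreadHt T.upper s x + if x ∈ Ioc s c then 2 else 0 := by
  obtain ⟨Q, hIoo, hup, -⟩ := h.exists_Ioo_eq_Ioc hc
  rw [hup, ← hIoo]
  simp only [mem_Ioo]
  split_ifs <;> simp

lemma tiles_eq (h : RibbonGrowRel T s T') (hc : SpecialCol T c) :
    T'.tiles = spreadTiles s T.tiles ∪
      (Ioc s c).image fun x => ({(x, spreadHt T.upper s x)} : Finset (ℤ × ℤ)) := by
  obtain ⟨Q, hIoo, -, htiles⟩ := h.exists_Ioo_eq_Ioc hc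
  rw [htiles, hIoo]

lemma gap_sub_one (h : RibbonGrowRel T s T') (hc : SpecialCol T c) (hx : x ≤ s) :
    T'.gap (x - 1) = T.gap x := by
  have hnotMem : x - 1 ∉ Ioc s c := by simp only [mem_Ioc]; omega
  rw [DyckTiling.gap, h.upper_ht hc, h.1, if_neg hnotMem, spreadHt_sub_one _ hx,
    spreadHt_sub_one _ hx, add_zero, DyckTiling.gap]

lemma gap_self (h : RibbonGrowRel T s T') (hc : SpecialCol T c) : T'.gap s = T.gap s := by
  rw [DyckTiling.gap, h.upper_ht hc, h.1, if_neg left_notMem_Ioc, spreadHt_self, spreadHt_self,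
    add_zero, add_sub_add_right_eq_sub, DyckTiling.gap]

lemma gap_add_one (h : RibbonGrowRel T s T') (hc : SpecialCol T c) (hx : s ≤ x) :
    T'.gap (x + 1) = T.gap x + if x < c then 2 else 0 := by
  have hmem : x + 1 ∈ Ioc s c ↔ x < c := by simp only [mem_Ioc]; omega
  simp only [DyckTiling.gap, h.upper_ht hc, h.1, hmem, spreadHt_add_one _ hx]
  ring

lemma numTiles_eq (h : RibbonGrowRel T s T') (hc : SpecialCol T c) :
    T'.numTiles = T.numTiles + (c - s).toNat := by
  have hdisj : Disjoint (spreadTiles s T.tiles)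
      ((Ioc s c).image fun x => ({(x, spreadHt T.upper s x)} : Finset (ℤ × ℤ))) := by
    rw [disjoint_right]
    intro u hu
    obtain ⟨x, hx, rfl⟩ := mem_image.1 hu
    exact T.singleton_spreadHt_notMem_spreadTiles (mem_Ioc.1 hx).1
  have hinj : Function.Injective fun x : ℤ => ({(x, spreadHt T.upper s x)} : Finset (ℤ × ℤ)) :=
    fun x y hxy => (Prod.mk.inj (singleton_inj.1 hxy)).1
  rw [DyckTiling.numTiles, h.tiles_eq hc, card_union_of_disjoint hdisj, spreadTiles,
    card_image_of_injective _ (spreadTile_injective s), card_image_of_injective _ hinj,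
    Int.card_Ioc, DyckTiling.numTiles]

end RibbonGrowRel

namespace IsDTR

variable {n : ℕ} {p : ℕ → ℕ}

lemma exists_ribbonGrowRel {T' : DyckTiling (n + 1)} (h : IsDTR (n + 1) (fun i => p i) T') :
    ∃ T, IsDTR n (fun i => p i) T ∧ RibbonGrowRel T ((p n : ℤ) - n) T' := by
  cases h with
  | cons _ _ T _ hT hgrow => exact ⟨T, hT, hgrow⟩

lemma specialCol {T : DyckTiling (n + 1)} (h : IsDTR (n + 1) (fun i => p i) T) :
    SpecialCol T ((p n : ℤ) - n) :=
  let ⟨_, _, hgrow⟩ := h.exists_ribbonGrowRel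
  hgrow.specialCol

end IsDTR

/-- The endpoints of the first `k` intervals `[L j, R j]`. -/
def endpoints (L R : ℕ → ℕ) (k : ℕ) : Finset ℕ := (range k).image L ∪ (range k).image R

/-- The number of endpoints of the first `k` intervals to the left of `m`. -/
def endpointRank (L R : ℕ → ℕ) (k m : ℕ) : ℕ := #{e ∈ endpoints L R k | e < m}

/-- The column of the tiling grown from the first `k` intervals at which the point with final
position `m` sits before the remaining intervals are inserted. Several `m` share a column when only
endpoints of later intervals separate them. -/
def growthColumn (L R : ℕ → ℕ) (k m : ℕ) : ℤ := (endpointRank L R k m : ℤ) - k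

/-- The first `N` of the intervals `[L k, R k]` form an insertion sequence if each of them is free
of endpoints of earlier ones, so that its own two endpoints are adjacent when it is inserted. -/
structure IsInsertionSequence (L R : ℕ → ℕ) (N : ℕ) : Prop where
  lt : ∀ k < N, L k < R k
  disjoint : ∀ k < N, Disjoint (endpoints L R k) (Icc (L k) (R k))

section Endpoints

variable {L R : ℕ → ℕ} {i k a b : ℕ}

lemma endpoints_succ (L R : ℕ → ℕ) (k : ℕ) :
    endpoints L R (k + 1) = insert (L k) (insert (R k) (endpoints L R k)) := by
  simp only [endpoints, range_add_one, image_insert, insert_union, union_insert]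
  exact insert_comm _ _ _

lemma left_mem_endpoints (h : i < k) : L i ∈ endpoints L R k :=
  mem_union_left _ (mem_image_of_mem _ (mem_range.2 h))

lemma right_mem_endpoints (h : i < k) : R i ∈ endpoints L R k :=
  mem_union_right _ (mem_image_of_mem _ (mem_range.2 h))

lemma endpoints_mono (L R : ℕ → ℕ) : Monotone (endpoints L R) := fun _ _ h =>
  union_subset_union (image_subset_image (range_subset_range.2 h))
    (image_subset_image (range_subset_range.2 h))

lemma growthColumn_mono (L R : ℕ → ℕ) (k : ℕ) : Monotone (growthColumn L R k) := fun a _ hab =>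
  sub_le_sub_right (Nat.cast_le.2 (card_le_card
    (monotone_filter_right _ fun _ _ (h : _ < a) => h.trans_le hab))) _

lemma growthColumn_lt (ha : a ∈ endpoints L R k) (hab : a < b) :
    growthColumn L R k a < growthColumn L R k b := by
  refine sub_lt_sub_right (Nat.cast_lt.2 (card_lt_card ?_)) _
  refine (ssubset_iff_of_subset (monotone_filter_right _ fun _ _ h => h.trans hab)).2 ⟨a, ?_, ?_⟩
  · exact mem_filter.2 ⟨ha, hab⟩
  · simp

lemma growthColumn_le_iff (ha : a ∈ endpoints L R k) :
    growthColumn L R k b ≤ growthColumn L R k a ↔ b ≤ a :=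
  ⟨fun h => not_lt.1 fun hab => (growthColumn_lt ha hab).not_ge h,
    fun h => growthColumn_mono L R k h⟩

end Endpoints

namespace IsInsertionSequence

variable {L R : ℕ → ℕ} {N k m i e : ℕ}

lemma mono (h : IsInsertionSequence L R N) (hk : k ≤ N) : IsInsertionSequence L R k :=
  ⟨fun i hi => h.lt i (hi.trans_le hk), fun i hi => h.disjoint i (hi.trans_le hk)⟩

lemma lt_left_or_right_lt (h : IsInsertionSequence L R N) (hk : k < N)
    (he : e ∈ endpoints L R k) : e < L k ∨ R k < e := by
  simpa only [mem_Icc, not_and_or, not_le] using disjoint_left.1 (h.disjoint k hk) he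

lemma right_lt_left_iff (h : IsInsertionSequence L R N) (hi : i + 1 < N) :
    R (i + 1) < L i ↔ L (i + 1) < L i := by
  have hlt := h.lt _ hi
  have := h.lt_left_or_right_lt hi (left_mem_endpoints i.lt_succ_self)
  omega

lemma left_notMem_endpoints (h : IsInsertionSequence L R N) (hk : k < N) :
    L k ∉ endpoints L R k := fun hmem => by
  have hlt := h.lt k hk
  have := h.lt_left_or_right_lt hk hmem
  omega

lemma right_notMem_endpoints (h : IsInsertionSequence L R N) (hk : k < N) :
    R k ∉ endpoints L R k := fun hmem => by
  have hlt := h.lt k hk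
  have := h.lt_left_or_right_lt hk hmem
  omega

lemma left_notMem_insert_right (h : IsInsertionSequence L R N) (hk : k < N) :
    L k ∉ insert (R k) (endpoints L R k) := by
  simp [(h.lt k hk).ne, h.left_notMem_endpoints hk]

lemma card_filter_endpoints (h : IsInsertionSequence L R N) (q : ℕ → Prop) [DecidablePred q] :
    #{e ∈ endpoints L R N | q e} = #{i ∈ range N | q (L i)} + #{i ∈ range N | q (R i)} := by
  induction N with
  | zero => simp [endpoints]
  | succ N ih =>
    specialize ih (h.mono N.le_succ)
    simp only [card_filter] at ih ⊢
    rw [endpoints_succ, sum_insert (h.left_notMem_insert_right N.lt_succ_self),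
      sum_insert (h.right_notMem_endpoints N.lt_succ_self), ih, sum_range_succ, sum_range_succ]
    omega

lemma endpointRank_eq (h : IsInsertionSequence L R N) (m : ℕ) :
    endpointRank L R N m = #{i ∈ range N | L i < m} + #{i ∈ range N | R i < m} :=
  h.card_filter_endpoints (· < m)

lemma growthColumn_succ (h : IsInsertionSequence L R N) (hk : k < N) (m : ℕ) :
    growthColumn L R (k + 1) m = growthColumn L R k m +
      (if L k < m then 1 else 0) + (if R k < m then 1 else 0) - 1 := by
  simp only [growthColumn, (h.mono hk).endpointRank_eq, (h.mono hk.le).endpointRank_eq,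
    card_filter, sum_range_succ]
  push_cast
  ring

lemma growthColumn_succ_of_le_left (h : IsInsertionSequence L R N) (hk : k < N) (hm : m ≤ L k) :
    growthColumn L R (k + 1) m = growthColumn L R k m - 1 := by
  have hlt := h.lt k hk
  rw [h.growthColumn_succ hk, if_neg (by omega), if_neg (by omega), add_zero, add_zero]

lemma growthColumn_succ_of_mem_Ioc (h : IsInsertionSequence L R N) (hk : k < N)
    (hm : m ∈ Ioc (L k) (R k)) : growthColumn L R (k + 1) m = growthColumn L R k m := by
  rw [mem_Ioc] at hm
  rw [h.growthColumn_succ hk, if_pos (by omega), if_neg (by omega), add_zero, add_sub_cancel_right]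

lemma growthColumn_succ_of_right_lt (h : IsInsertionSequence L R N) (hk : k < N) (hm : R k < m) :
    growthColumn L R (k + 1) m = growthColumn L R k m + 1 := by
  have hlt := h.lt k hk
  rw [h.growthColumn_succ hk, if_pos (by omega), if_pos hm, add_sub_cancel_right]

lemma growthColumn_eq_left (h : IsInsertionSequence L R N) (hk : k < N)
    (hm : m ∈ Ioc (L k) (R k)) : growthColumn L R k m = growthColumn L R k (L k) := by
  rw [mem_Ioc] at hm
  unfold growthColumn endpointRank
  congr 3
  refine filter_congr fun e he => ?_
  have := h.lt_left_or_right_lt hk he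
  omega

lemma growthColumn_succ_lt_iff (h : IsInsertionSequence L R N) (hk : k < N) :
    growthColumn L R (k + 1) m < growthColumn L R k (L k) ↔ m ≤ L k := by
  have hmem : L k ∈ endpoints L R (k + 1) := left_mem_endpoints k.lt_succ_self
  rw [← growthColumn_le_iff hmem, h.growthColumn_succ_of_le_left hk le_rfl, Int.le_sub_one_iff]

/-- By disjointness an interval inserted later has both endpoints between `a` and `b` or neither. -/
lemma growthColumn_sub_growthColumn (h : IsInsertionSequence L R N) {a b : ℕ}
    (ha : a ∈ endpoints L R k) (hb : b ∈ endpoints L R k) (hab : a < b) (hkN : k ≤ N) :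
    growthColumn L R N b - growthColumn L R N a =
      growthColumn L R k b - growthColumn L R k a + 2 * #{j ∈ Ico k N | a < L j ∧ L j < b} := by
  induction N, hkN using Nat.le_induction with
  | base => simp
  | succ N hkN ih =>
    specialize ih (h.mono N.le_succ)
    have hlt := h.lt N N.lt_succ_self
    have ha' := h.lt_left_or_right_lt N.lt_succ_self (endpoints_mono L R hkN ha)
    have hb' := h.lt_left_or_right_lt N.lt_succ_self (endpoints_mono L R hkN hb)
    rw [card_filter] at ih ⊢
    rw [h.growthColumn_succ N.lt_succ_self, h.growthColumn_succ N.lt_succ_self,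
      sum_Ico_succ_top hkN]
    push_cast at ih ⊢
    split_ifs <;> omega

lemma endpoints_eq_range (h : IsInsertionSequence L R N) (hR : ∀ i < N, R i < 2 * N) :
    endpoints L R N = range (2 * N) := by
  refine eq_of_subset_of_card_le (fun e he => ?_) ?_
  · simp only [endpoints, mem_union, mem_image, mem_range] at he ⊢
    rcases he with ⟨i, hi, rfl⟩ | ⟨i, hi, rfl⟩
    · exact (h.lt i hi).trans (hR i hi)
    · exact hR i hi
  · have hcard := h.card_filter_endpoints fun _ => True
    simp only [filter_true, card_range] at hcard ⊢
    omega

lemma growthColumn_eq_sub (h : IsInsertionSequence L R N) (hR : ∀ i < N, R i < 2 * N)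
    (hm : m ≤ 2 * N) : growthColumn L R N m = (m : ℤ) - N := by
  have hfilter : {e ∈ range (2 * N) | e < m} = range m := by
    ext e
    simp only [mem_filter, mem_range]
    omega
  rw [growthColumn, endpointRank, h.endpoints_eq_range hR, hfilter, card_range]

/-- The left-hand side is the length of the ribbon added with interval `i + 1`, which reaches from
`R (i + 1)` to `L i` since interval `i` left its column special. -/
lemma toNat_growthColumn_sub (h : IsInsertionSequence L R N) (hi : i + 1 < N) :
    (growthColumn L R i (L i) - growthColumn L R (i + 1) (L (i + 1))).toNat =
      if L (i + 1) < L i then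
        growthColumn L R (i + 2) (L i) - growthColumn L R (i + 2) (R (i + 1)) else 0 := by
  have hlt := h.lt _ hi
  have hleft := h.growthColumn_succ_of_le_left (by omega : i < N) le_rfl
  have hmem : L i ∈ endpoints L R (i + 1) := left_mem_endpoints i.lt_succ_self
  split_ifs with hdes
  · have hRL := (h.right_lt_left_iff hi).2 hdes
    have hlast : R (i + 1) ∈ Ioc (L (i + 1)) (R (i + 1)) := right_mem_Ioc.2 hlt
    rw [h.growthColumn_succ_of_right_lt hi hRL, h.growthColumn_succ_of_mem_Ioc hi hlast,
      h.growthColumn_eq_left hi hlast]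
    have := growthColumn_mono L R (i + 1) hdes.le
    omega
  · have := h.lt_left_or_right_lt hi hmem
    have := growthColumn_lt hmem (by omega : L i < L (i + 1))
    omega

end IsInsertionSequence

/-- The number of descents `i` whose ribbon, from `R (i + 1)` to `L i`, passes over position `m`
once `n` intervals have been inserted. -/
def ribbonCount (L R : ℕ → ℕ) (n m : ℕ) : ℕ := #{i ∈ range (n - 1) | m ∈ Ioc (R (i + 1)) (L i)}

lemma ribbonCount_add_two (L R : ℕ → ℕ) (n m : ℕ) :
    ribbonCount L R (n + 2) m =
      ribbonCount L R (n + 1) m + if m ∈ Ioc (R (n + 1)) (L n) then 1 else 0 := by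
  simp only [ribbonCount, card_filter, Nat.add_succ_sub_one, sum_range_succ, Nat.add_zero]

lemma RibbonGrowRel.gap_growthColumn_succ {L R : ℕ → ℕ} {N k n m : ℕ} {T : DyckTiling n}
    {T' : DyckTiling (n + 1)} {c : ℤ} (hgrow : RibbonGrowRel T (growthColumn L R k (L k)) T')
    (hc : SpecialCol T c) (h : IsInsertionSequence L R N) (hk : k < N) :
    T'.gap (growthColumn L R (k + 1) m) = T.gap (growthColumn L R k m) +
      if R k < m ∧ growthColumn L R k m < c then 2 else 0 := by
  have hlt := h.lt k hk
  rcases le_or_gt m (L k) with hm | hm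
  · rw [h.growthColumn_succ_of_le_left hk hm, if_neg (by omega), add_zero,
      hgrow.gap_sub_one hc (growthColumn_mono L R k hm)]
  rcases le_or_gt m (R k) with hm' | hm'
  · have hmem := mem_Ioc.2 ⟨hm, hm'⟩
    rw [h.growthColumn_succ_of_mem_Ioc hk hmem, h.growthColumn_eq_left hk hmem,
      if_neg (by omega), add_zero, hgrow.gap_self hc]
  · simp only [h.growthColumn_succ_of_right_lt hk hm', hm', true_and,
      hgrow.gap_add_one hc (growthColumn_mono L R k hm.le)]

namespace IsDTR

variable {L R : ℕ → ℕ} {n : ℕ}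

lemma exists_ribbonGrowRel_growthColumn {T' : DyckTiling (n + 2)}
    (hT' : IsDTR (n + 2) (fun i => endpointRank L R i (L i)) T') :
    ∃ T, IsDTR (n + 1) (fun i => endpointRank L R i (L i)) T ∧
      SpecialCol T (growthColumn L R n (L n)) ∧
      RibbonGrowRel T (growthColumn L R (n + 1) (L (n + 1))) T' := by
  obtain ⟨T, hT, hgrow⟩ := hT'.exists_ribbonGrowRel (p := fun i => endpointRank L R i (L i))
  exact ⟨T, hT, hT.specialCol (p := fun i => endpointRank L R i (L i)), hgrow⟩

variable {T : DyckTiling n}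

lemma gap_growthColumn (h : IsInsertionSequence L R n)
    (hT : IsDTR n (fun i => endpointRank L R i (L i)) T) (m : ℕ) :
    T.gap (growthColumn L R n m) = 2 * ribbonCount L R n m := by
  induction n using Nat.twoStepInduction with
  | zero => simp [DyckTiling.gap_eq_zero_of_subsingleton, ribbonCount]
  | one => simp [DyckTiling.gap_eq_zero_of_subsingleton, ribbonCount]
  | more n _ ih =>
    obtain ⟨T₀, hT₀, hc, hgrow⟩ := hT.exists_ribbonGrowRel_growthColumn
    rw [hgrow.gap_growthColumn_succ hc h (by omega), ih (h.mono (by omega)) hT₀,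
      ribbonCount_add_two]
    simp only [h.growthColumn_succ_lt_iff (by omega : n < n + 2), mem_Ioc]
    push_cast
    split_ifs <;> ring

lemma area_eq (h : IsInsertionSequence L R n) (hR : ∀ i < n, R i < 2 * n)
    (hT : IsDTR n (fun i => endpointRank L R i (L i)) T) :
    (T.area : ℤ) = ∑ i ∈ range (n - 1) with L (i + 1) < L i, ((L i : ℤ) - R (i + 1)) := by
  have hgap : ∀ m ∈ range (2 * n + 1), T.gap ((m : ℤ) - n) = 2 * ribbonCount L R n m :=
    fun m hm => by
      rw [← h.growthColumn_eq_sub hR (Nat.lt_succ_iff.1 (mem_range.1 hm)), hT.gap_growthColumn h]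
  have hcount : T.area = ∑ m ∈ range (2 * n + 1), ribbonCount L R n m := by
    have harea := T.two_mul_area
    rw [sum_congr rfl hgap, ← mul_sum] at harea
    exact_mod_cast mul_left_cancel₀ two_ne_zero harea
  have hcover : ∀ i ∈ range (n - 1), (#{m ∈ range (2 * n + 1) | m ∈ Ioc (R (i + 1)) (L i)} : ℤ) =
      if L (i + 1) < L i then (L i : ℤ) - R (i + 1) else 0 := fun i hi => by
    rw [mem_range] at hi
    have hlt := h.lt i (by omega)
    have hRi := hR i (by omega)
    have hfilter :
        {m ∈ range (2 * n + 1) | m ∈ Ioc (R (i + 1)) (L i)} = Ioc (R (i + 1)) (L i) := by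
      ext m
      simp only [mem_filter, mem_range, mem_Ioc]
      omega
    have := h.right_lt_left_iff (by omega : i + 1 < n)
    rw [hfilter, Nat.card_Ioc]
    split_ifs <;> omega
  rw [hcount, sum_filter, ← sum_congr rfl hcover]
  exact_mod_cast sum_card_bipartiteAbove_eq_sum_card_bipartiteBelow _

lemma numTiles_eq_sum_toNat
    (hT : IsDTR n (fun i => endpointRank L R i (L i)) T) :
    T.numTiles = ∑ i ∈ range (n - 1),
      (growthColumn L R i (L i) - growthColumn L R (i + 1) (L (i + 1))).toNat := by
  induction n using Nat.twoStepInduction with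
  | zero => exact DyckTiling.numTiles_eq_zero_of_subsingleton
  | one => exact DyckTiling.numTiles_eq_zero_of_subsingleton
  | more n _ ih =>
    obtain ⟨T₀, hT₀, hc, hgrow⟩ := hT.exists_ribbonGrowRel_growthColumn
    rw [hgrow.numTiles_eq hc, ih hT₀]
    exact (sum_range_succ _ n).symm

lemma numTiles_eq (h : IsInsertionSequence L R n) (hR : ∀ i < n, R i < 2 * n)
    (hT : IsDTR n (fun i => endpointRank L R i (L i)) T) :
    (T.numTiles : ℤ) = ∑ i ∈ range (n - 1) with L (i + 1) < L i,
      ((L i : ℤ) - R (i + 1) - 2 * #{j ∈ Ico (i + 2) n | R (i + 1) < L j ∧ L j < L i}) := by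
  rw [hT.numTiles_eq_sum_toNat, Nat.cast_sum, sum_filter]
  refine sum_congr rfl fun i hi => ?_
  rw [mem_range] at hi
  have hi' : i + 1 < n := by omega
  rw [(h.mono (by omega : i + 2 ≤ n)).toNat_growthColumn_sub (by omega)]
  split_ifs with hdes
  · have hdiff := h.growthColumn_sub_growthColumn (right_mem_endpoints (by omega : i + 1 < i + 2))
      (left_mem_endpoints (by omega : i < i + 2)) ((h.right_lt_left_iff hi').2 hdes) (by omega)
    have hlt := h.lt i (by omega)
    have hRi := hR i (by omega)
    rw [h.growthColumn_eq_sub hR (by omega), h.growthColumn_eq_sub hR (hR _ hi').le] at hdiff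
    omega
  · rfl

end IsDTR

lemma IsChord.lt_left_or_right_lt {n p q p' q' : ℕ} {P : DyckPath n} (h : IsChord P p q)
    (h' : IsChord P p' q') (hp : p < p') : q < p' ∨ q' < q := by
  obtain ⟨-, -, -, -, hclose, habove⟩ := h
  obtain ⟨hlt', -, -, -, hclose', habove'⟩ := h'
  by_contra! hcross
  have hpp' := habove p' hp hcross.1
  rcases hcross.2.eq_or_lt with rfl | hqq'
  · omega
  · have := habove' (q + 1) (by omega) hqq'
    omega

section Indices

lemma nextIdx_val {n : ℕ} {i : Fin n} (hi : (i : ℕ) + 1 < n) : (nextIdx i : ℕ) = i + 1 :=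
  Nat.mod_eq_of_lt hi

lemma sum_filter_val_mem {M : Type*} [AddCommMonoid M] {n : ℕ} {s : Finset ℕ} (hs : s ⊆ range n)
    (q : ℕ → Prop) [DecidablePred q] (g : ℕ → M) :
    ∑ i ∈ ({i | (i : ℕ) ∈ s ∧ q i} : Finset (Fin n)), g i = ∑ i ∈ s with q i, g i := by
  have hmap : ({i | (i : ℕ) ∈ s ∧ q i} : Finset (Fin n)).map Fin.valEmbedding = {i ∈ s | q i} := by
    ext i
    simp only [mem_map, mem_filter, mem_univ, true_and, Fin.valEmbedding_apply]
    exact ⟨by rintro ⟨i, hi, rfl⟩; exact hi, fun hi => ⟨⟨i, mem_range.1 (hs hi.1)⟩, hi, rfl⟩⟩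
  rw [← hmap, sum_map]
  rfl

lemma card_filter_val_mem {n : ℕ} {s : Finset ℕ} (hs : s ⊆ range n) (q : ℕ → Prop)
    [DecidablePred q] : #{i : Fin n | (i : ℕ) ∈ s ∧ q i} = #{i ∈ s | q i} := by
  simpa only [card_eq_sum_ones] using sum_filter_val_mem hs q fun _ => 1

end Indices

namespace ChordLabeling

variable {n : ℕ} {P : DyckPath n} (C : ChordLabeling P)

/-- The positions `C.l` of the left endpoints, extended by `0` to a sequence indexed by `ℕ`. -/
def leftEnd : ℕ → ℕ := Function.extend Fin.val C.l 0

/-- The positions `C.r` of the right endpoints, extended by `0` to a sequence indexed by `ℕ`. -/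
def rightEnd : ℕ → ℕ := Function.extend Fin.val C.r 0

@[simp]
lemma leftEnd_val (i : Fin n) : C.leftEnd i = C.l i := Fin.val_injective.extend_apply _ _ _

@[simp]
lemma rightEnd_val (i : Fin n) : C.rightEnd i = C.r i := Fin.val_injective.extend_apply _ _ _

lemma left_right_notMem_Icc {i k : Fin n} (hik : i < k) :
    C.l i ∉ Icc (C.l k) (C.r k) ∧ C.r i ∉ Icc (C.l k) (C.r k) := by
  have hi := C.chord i
  have hk := C.chord k
  have hlt := hi.1
  simp only [mem_Icc]
  rcases lt_trichotomy (C.l i) (C.l k) with hl | hl | hl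
  · have := hi.lt_left_or_right_lt hk hl
    omega
  · exact absurd (C.inj hl) hik.ne
  · have hnest : ¬C.r i < C.r k := fun hr => hik.not_gt (C.natural i k hl hr)
    have := hk.lt_left_or_right_lt hi hl
    omega

lemma isInsertionSequence : IsInsertionSequence C.leftEnd C.rightEnd n where
  lt k hk := by
    lift k to Fin n using hk
    simpa using (C.chord k).1
  disjoint k hk := by
    lift k to Fin n using hk
    refine disjoint_left.2 fun e he => ?_
    simp only [endpoints, mem_union, mem_image, mem_range] at he
    rcases he with ⟨i, hik, rfl⟩ | ⟨i, hik, rfl⟩ <;>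
      lift i to Fin n using hik.trans k.isLt <;>
      simp only [leftEnd_val, rightEnd_val]
    · exact (C.left_right_notMem_Icc hik).1
    · exact (C.left_right_notMem_Icc hik).2

lemma rightEnd_lt : ∀ i < n, C.rightEnd i < 2 * n := fun i hi => by
  lift i to Fin n using hi
  simpa using (C.chord i).2.1

lemma seqOf_eq :
    seqOf C = fun i : Fin n => endpointRank C.leftEnd C.rightEnd i (C.leftEnd i) := by
  funext k
  have hk : range k ⊆ range n := range_subset_range.2 k.isLt.le
  rw [(C.isInsertionSequence.mono k.isLt.le).endpointRank_eq, ← card_filter_val_mem hk,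
    ← card_filter_val_mem hk]
  simp only [seqOf, leftEnd_val, rightEnd_val, mem_range, Fin.lt_def]

lemma leftEnd_add_one {i : Fin n} (hi : (i : ℕ) + 1 < n) :
    C.leftEnd (i + 1) = C.l (nextIdx i) := by
  rw [← nextIdx_val hi, leftEnd_val]

lemma rightEnd_add_one {i : Fin n} (hi : (i : ℕ) + 1 < n) :
    C.rightEnd (i + 1) = C.r (nextIdx i) := by
  rw [← nextIdx_val hi, rightEnd_val]

lemma mem_descentFinset {i : Fin n} :
    i ∈ descentFinset C.l ↔ (i : ℕ) ∈ range (n - 1) ∧ C.leftEnd (i + 1) < C.leftEnd i := by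
  simp only [descentFinset, mem_filter, mem_univ, true_and, mem_range, leftEnd_val,
    Nat.lt_sub_iff_add_lt]
  exact and_congr_right fun hi => by rw [C.leftEnd_add_one hi]

lemma sum_descentFinset {M : Type*} [AddCommMonoid M] {f : Fin n → M} {g : ℕ → M}
    (hfg : ∀ i : Fin n, (i : ℕ) + 1 < n → f i = g i) :
    ∑ i ∈ descentFinset C.l, f i =
      ∑ i ∈ range (n - 1) with C.leftEnd (i + 1) < C.leftEnd i, g i := by
  rw [← sum_filter_val_mem (range_subset_range.2 (Nat.sub_le n 1))]
  refine sum_congr (by ext i; simp [C.mem_descentFinset]) fun i hi => hfg i ?_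
  have := (mem_filter.1 hi).2.1
  exact Nat.lt_sub_iff_add_lt.1 (mem_range.1 this)

lemma card_filter_between {i : Fin n} (hi : (i : ℕ) + 1 < n) :
    #{j : Fin n | (i : ℕ) + 1 < j ∧ C.r (nextIdx i) < C.l j ∧ C.l j < C.l i} =
      #{j ∈ Ico ((i : ℕ) + 2) n |
        C.rightEnd (i + 1) < C.leftEnd j ∧ C.leftEnd j < C.leftEnd i} := by
  rw [← card_filter_val_mem fun j hj => mem_range.2 (mem_Ico.1 hj).2]
  simp only [C.rightEnd_add_one hi, leftEnd_val, mem_Ico, Fin.is_lt, and_true, Nat.succ_le_iff]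

end ChordLabeling

/-- For `T = DTR(λ, σ)` with `ℓ_i, r_i` the endpoint positions of the
chord labeled `i`:
`area(T) = Σ_{i ∈ DES(ℓ)} (ℓ_i − r_{i+1})` and
`tiles(T) = Σ_{i ∈ DES(ℓ)} (ℓ_i − r_{i+1} − 2·#{j > i+1 : r_{i+1} < ℓ_j < ℓ_i})`. -/
theorem area_tiles_DTR_formulas (n : ℕ) (lam : DyckPath n) (C : ChordLabeling lam)
    (σ : Equiv.Perm (Fin n)) (hσ : IsStandardization C.l σ)
    (T : DyckTiling n) (hT : IsDTR n (seqOf C) T) :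
    (T.area : ℤ) = ∑ i ∈ descentFinset C.l, ((C.l i : ℤ) - (C.r (nextIdx i) : ℤ)) ∧
    (T.numTiles : ℤ) = ∑ i ∈ descentFinset C.l,
      ((C.l i : ℤ) - (C.r (nextIdx i) : ℤ) -
        2 * ((Finset.univ.filter fun j : Fin n =>
          (i : ℕ) + 1 < (j : ℕ) ∧ C.r (nextIdx i) < C.l j ∧ C.l j < C.l i).card : ℤ)) := by
  have hins := C.isInsertionSequence
  rw [C.seqOf_eq] at hT
  rw [hT.area_eq hins C.rightEnd_lt, hT.numTiles_eq hins C.rightEnd_lt]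
  constructor
  · refine (C.sum_descentFinset fun i hi => ?_).symm
    rw [C.leftEnd_val, C.rightEnd_add_one hi]
  · refine (C.sum_descentFinset fun i hi => ?_).symm
    rw [C.card_filter_between hi, C.leftEnd_val, C.rightEnd_add_one hi]

end
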